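/- Let k ≥ 1 and n ≥ k + 1. Let s_1, …, s_l be (k−1)-simplices in ℝ^n and F_1, …, F_l ∈ ℝ^n, and suppose the finite system of forces F = Σ_{i=1}^{l} F_i μ_{s_i} is in equilibrium, i.e. Σ_{i=1}^{l} H^{k−1}(s_i) F_i = 0 and Σ_{i=1}^{l} H^{k−1}(s_i) (ĥ(s_i) ∧ F_i) = 0. Then there exist finitely many k-simplices τ_1, …, τ_m in ℝ^n and symmetric real n×n matrices A_1, …, A_m, with each A_j structural for τ_j, such that F = Σ_{j=1}^{m} A_j ⊗ Beam(τ_j) as ℝ^n-valued vector measures. -/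

import Mathlib

open MeasureTheory Matrix
open scoped RealInnerProductSpace

noncomputable section

abbrev Euc (n : ℕ) : Type := EuclideanSpace ℝ (Fin n)

/-- The action of an `n × n` real matrix on a vector of `ℝⁿ`. -/
def matVec {n : ℕ} (A : Matrix (Fin n) (Fin n) ℝ) (v : Euc n) : Euc n :=
  Matrix.toEuclideanLin A v

/-- `wedge v w = v wᵀ − w vᵀ`. -/
def wedge {n : ℕ} (v w : Euc n) : Matrix (Fin n) (Fin n) ℝ :=
  Matrix.of fun p q => v p * w q - w p * v q

/-- `rankOne v = v vᵀ`. -/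
def rankOne {n : ℕ} (v : Euc n) : Matrix (Fin n) (Fin n) ℝ :=
  Matrix.of fun p q => v p * v q

/-- The (closed) simplex spanned by a family of points: the convex hull of its range. -/
def simplexSet {n : ℕ} {ι : Type*} (b : ι → Euc n) : Set (Euc n) :=
  convexHull ℝ (Set.range b)

/-- The barycenter of a finite family of points. -/
def bary {n : ℕ} {ι : Type*} [Fintype ι] (b : ι → Euc n) : Euc n :=
  (Fintype.card ι : ℝ)⁻¹ • ∑ i, b i

/-- The vertices of the face of the simplex `b` opposite to the vertex `i`. -/
def face {n K : ℕ} (b : Fin K → Euc n) (i : Fin K) : {j : Fin K // j ≠ i} → Euc n :=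
  fun j => b j.1

/-- The vector measure `Σᵢ Fᵢ μ_{sᵢ}` of a finite system of forces, as an
`ℝⁿ`-valued set function; here `d` is the Hausdorff dimension of the simplices. -/
def sys {n l : ℕ} {ι : Type*} (d : ℝ) (s : Fin l → ι → Euc n) (F : Fin l → Euc n) :
    Set (Euc n) → Euc n :=
  fun S => ∑ i, (μH[d] (S ∩ simplexSet (s i))).toReal • F i

/-- A finite system of forces is in equilibrium: zero net force and zero net torque. -/
def equil {n l : ℕ} {ι : Type*} [Fintype ι] (d : ℝ) (s : Fin l → ι → Euc n)
    (F : Fin l → Euc n) : Prop :=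
  (∑ i, (μH[d] (simplexSet (s i))).toReal • F i = 0) ∧
  (∑ i, (μH[d] (simplexSet (s i))).toReal • wedge (bary (s i)) (F i) = 0)

/-- `v` is the outward unit conormal of the face of `b` opposite vertex `i`. -/
def IsConormal {n K : ℕ} (b : Fin K → Euc n) (i : Fin K) (v : Euc n) : Prop :=
  v ∈ vectorSpan ℝ (Set.range b) ∧ ‖v‖ = 1 ∧
    (∀ w ∈ vectorSpan ℝ (Set.range (face b i)), ⟪v, w⟫ = 0) ∧
    ⟪v, b i - bary (face b i)⟫ < 0

open scoped Classical in
/-- The outward unit conormal of the face of `b` opposite vertex `i`. -/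
def conormal {n K : ℕ} (b : Fin K → Euc n) (i : Fin K) : Euc n :=
  if h : ∃ v, IsConormal b i v then h.choose else 0

/-- A matrix is structural for a simplex if its range is contained in the
direction space of the simplex. -/
def Structural {n : ℕ} {ι : Type*} (A : Matrix (Fin n) (Fin n) ℝ) (b : ι → Euc n) : Prop :=
  ∀ v, matVec A v ∈ vectorSpan ℝ (Set.range b)

/-- The beam `A ⊗ Beam(τ)` of a simplex `τ` with `K` vertices (so of dimension `K − 1`,
with faces of dimension `K − 2`), as an `ℝⁿ`-valued set function. -/
def beam {n K : ℕ} (A : Matrix (Fin n) (Fin n) ℝ) (b : Fin K → Euc n) :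
    Set (Euc n) → Euc n :=
  fun S => ∑ i, (μH[(K : ℝ) - 2] (S ∩ simplexSet (face b i))).toReal • matVec A (conormal b i)

/-- `G` is a finite sum of beams over simplices with `K` vertices, with symmetric
coefficient matrices that are structural for their simplices. -/
def IsBeamSum {n : ℕ} (K : ℕ) (G : Set (Euc n) → Euc n) : Prop :=
  ∃ (m : ℕ) (τ : Fin m → Fin K → Euc n) (A : Fin m → Matrix (Fin n) (Fin n) ℝ),
    (∀ j, AffineIndependent ℝ (τ j)) ∧ (∀ j, (A j).IsSymm) ∧
    (∀ j, Structural (A j) (τ j)) ∧ (G = fun S => ∑ j, beam (A j) (τ j) S)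

section Rigid

variable {E : Type*} [NormedAddCommGroup E] [InnerProductSpace ℝ E] [FiniteDimensional ℝ E]

lemma const_of_swap {α β : Type*} [DecidableEq α] (P : Finset α) (m : ℕ) (f : Finset α → β)
    (h : ∀ ρ ⊆ P, ρ.card + 1 = m → ∀ b ∈ P, b ∉ ρ → ∀ b' ∈ P, b' ∉ ρ →
      f (insert b ρ) = f (insert b' ρ))
    (r r' : Finset α) (hr : r ⊆ P) (hrc : r.card = m) (hr' : r' ⊆ P) (hrc' : r'.card = m) :
    f r = f r' := by
  induction hN : (r \ r').card generalizing r with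
  | zero =>
    have h1 : r ⊆ r' := by
      rw [Finset.card_eq_zero, Finset.sdiff_eq_empty_iff_subset] at hN; exact hN
    rw [Finset.eq_of_subset_of_card_le h1 (by omega)]
  | succ N ih =>
    obtain ⟨b, hb⟩ : (r \ r').Nonempty := by rw [← Finset.card_pos]; omega
    obtain ⟨b', hb'⟩ : (r' \ r).Nonempty := by
      rw [← Finset.card_pos]
      have := Finset.card_sdiff_add_card_inter r r'
      have := Finset.card_sdiff_add_card_inter r' r
      rw [Finset.inter_comm] at this
      omega
    rw [Finset.mem_sdiff] at hb hb'
    have hcard : (r.erase b).card + 1 = m := by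
      rw [Finset.card_erase_add_one hb.1, hrc]
    have hnb' : b' ∉ r.erase b := fun hh => hb'.2 (Finset.mem_of_mem_erase hh)
    have h1 := h (r.erase b) ((Finset.erase_subset _ _).trans hr) hcard b (hr hb.1) (by simp) b'
      (hr' hb'.1) hnb'
    rw [Finset.insert_erase hb.1] at h1
    rw [h1]
    apply ih
    · intro x hx
      rcases Finset.mem_insert.1 hx with rfl | hx
      · exact hr' hb'.1
      · exact hr (Finset.mem_of_mem_erase hx)
    · rw [Finset.card_insert_of_notMem hnb', hcard]
    · have : insert b' (r.erase b) \ r' = (r \ r').erase b := by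
        ext x
        simp only [Finset.mem_sdiff, Finset.mem_insert, Finset.mem_erase]
        constructor
        · rintro ⟨rfl | h, h2⟩
          · exact absurd hb'.1 h2
          · exact ⟨h.1, h.2, h2⟩
        · rintro ⟨h1, h2, h3⟩
          exact ⟨Or.inr ⟨h1, h2⟩, h3⟩
      rw [this, Finset.card_erase_of_mem (Finset.mem_sdiff.2 hb), hN]; rfl

lemma frame_rigid (t : Set E) (a₀ : E) (ha₀ : a₀ ∈ t) (g : E → E)
    (hg : ∀ a ∈ t, ∀ a' ∈ t, ⟪g a - g a', a - a'⟫ = 0)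
    (hspan : ∀ z : E, (∀ a ∈ t, ∀ a' ∈ t, ⟪z, a - a'⟫ = 0) → z = 0) :
    ∃ Ω : E →ₗ[ℝ] E, (∀ x y, ⟪Ω x, y⟫ = - ⟪x, Ω y⟫) ∧
      ∀ a ∈ t, ∀ a' ∈ t, g a - g a' = Ω (a - a') := by
  let X : (t →₀ ℝ) →ₗ[ℝ] E := Finsupp.linearCombination ℝ (fun a : t => (a : E) - a₀)
  let Y : (t →₀ ℝ) →ₗ[ℝ] E := Finsupp.linearCombination ℝ (fun a : t => g a - g a₀)
  have hX1 : ∀ a : t, X (Finsupp.single a 1) = (a : E) - a₀ := fun a => by simp [X]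
  have hY1 : ∀ a : t, Y (Finsupp.single a 1) = g a - g a₀ := fun a => by simp [Y]
  have hbase : ∀ a b : t, ⟪g a - g a₀, (b : E) - a₀⟫ + ⟪(a : E) - a₀, g b - g a₀⟫ = 0 := by
    intro a b
    have h1 := hg a a.2 a₀ ha₀
    have h2 := hg b b.2 a₀ ha₀
    have h3 := hg a a.2 b b.2
    have e1 : g a - g b = (g a - g a₀) - (g b - g a₀) := by abel
    have e2 : (a : E) - b = ((a : E) - a₀) - (b - a₀) := by abel
    rw [e1, e2] at h3
    simp only [inner_sub_left (g a - g a₀), inner_sub_right _ ((a : E) - a₀)] at h3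
    rw [real_inner_comm (g b - g a₀) ((a : E) - a₀)]
    linarith
  have hB : ∀ c c' : t →₀ ℝ, ⟪Y c, X c'⟫ + ⟪X c, Y c'⟫ = 0 := by
    intro c c'
    induction c using Finsupp.induction_linear with
    | zero => simp
    | add f h hf hh => simp only [map_add, inner_add_left]; linarith
    | single a r =>
      induction c' using Finsupp.induction_linear with
      | zero => simp
      | add f h hf hh => simp only [map_add, inner_add_right]; linarith
      | single b s =>
        have e1 : Finsupp.single a r = r • Finsupp.single a (1 : ℝ) := by simp
        have e2 : Finsupp.single b s = s • Finsupp.single b (1 : ℝ) := by simp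
        rw [e1, e2]
        simp only [map_smul, hX1, hY1, real_inner_smul_left, real_inner_smul_right]
        have := hbase a b
        linear_combination r * s * this
  have hsurj : Function.Surjective X := by
    rw [← LinearMap.range_eq_top, ← Submodule.orthogonal_eq_bot_iff, Submodule.eq_bot_iff]
    intro z hz
    apply hspan
    have h0 : ∀ a ∈ t, ⟪z, a - a₀⟫ = 0 := by
      intro a ha
      rw [Submodule.mem_orthogonal'] at hz
      exact hz _ ⟨Finsupp.single ⟨a, ha⟩ 1, hX1 ⟨a, ha⟩⟩
    intro a ha a' ha'
    have : a - a' = (a - a₀) - (a' - a₀) := by abel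
    rw [this, inner_sub_right, h0 a ha, h0 a' ha', sub_zero]
  have hker : ∀ c, X c = 0 → Y c = 0 := by
    intro c hc
    obtain ⟨c', hc'⟩ := hsurj (Y c)
    have := hB c c'
    rw [hc, hc', inner_zero_left, add_zero] at this
    exact inner_self_eq_zero.1 this
  obtain ⟨R, hR⟩ := X.exists_rightInverse_of_surjective (LinearMap.range_eq_top.2 hsurj)
  have hR' : ∀ x, X (R x) = x := fun x => by
    have := congrArg (fun f => f x) hR
    simpa using this
  refine ⟨Y ∘ₗ R, ?_, ?_⟩
  · intro x y
    have := hB (R x) (R y)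
    rw [hR', hR'] at this
    simp only [LinearMap.comp_apply]
    linarith
  · have h0 : ∀ a ∈ t, (Y ∘ₗ R) (a - a₀) = g a - g a₀ := by
      intro a ha
      have : Y (R (a - a₀) - Finsupp.single ⟨a, ha⟩ 1) = 0 := by
        apply hker
        rw [map_sub, hR', hX1, sub_self]
      rw [map_sub, sub_eq_zero, hY1] at this
      exact this
    intro a ha a' ha'
    have : a - a' = (a - a₀) - (a' - a₀) := by abel
    rw [this, map_sub, h0 a ha, h0 a' ha']
    abel

lemma core_rigid [DecidableEq E] (n m : ℕ) (P : Finset E) (hP : m + n + 10 ≤ P.card)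
    (hspan : ∀ t ⊆ P, n + 1 ≤ t.card → ∀ z : E, (∀ a ∈ t, ∀ a' ∈ t, ⟪z, a - a'⟫ = 0) → z = 0)
    (v : Finset E → E)
    (hv : ∀ r ⊆ P, r.card = m → ∀ a ∈ P, a ∉ r → ∀ a' ∈ P, a' ∉ r →
      ⟪v (insert a r) - v (insert a' r), a - a'⟫ = 0) :
    ∃ (Ω : E →ₗ[ℝ] E) (v₀ : E), (∀ x y, ⟪Ω x, y⟫ = - ⟪x, Ω y⟫) ∧
      ∀ s ⊆ P, s.card = m + 1 → v s = v₀ + Ω (∑ x ∈ s, x) := by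
  have hex : ∀ r : Finset E, ∃ Ω : E →ₗ[ℝ] E, r ⊆ P → r.card = m →
      ((∀ x y, ⟪Ω x, y⟫ = - ⟪x, Ω y⟫) ∧ ∀ a ∈ P \ r, ∀ a' ∈ P \ r,
        v (insert a r) - v (insert a' r) = Ω (a - a')) := by
    intro r
    by_cases hr : r ⊆ P ∧ r.card = m
    · have hc : (P \ r).card + r.card = P.card := Finset.card_sdiff_add_card_eq_card hr.1
      obtain ⟨a₀, ha₀⟩ : (P \ r).Nonempty := by rw [← Finset.card_pos]; omega
      obtain ⟨Ω, h1, h2⟩ := frame_rigid (↑(P \ r) : Set E) a₀ ha₀ (fun a => v (insert a r))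
        (by
          intro a ha a' ha'
          rw [Finset.mem_coe, Finset.mem_sdiff] at ha ha'
          exact hv r hr.1 hr.2 a ha.1 ha.2 a' ha'.1 ha'.2)
        (by
          intro z hz
          exact hspan (P \ r) Finset.sdiff_subset (by omega) z hz)
      exact ⟨Ω, fun _ _ => ⟨h1, h2⟩⟩
    · exact ⟨0, fun h1 h2 => absurd ⟨h1, h2⟩ hr⟩
  choose Om hOm using hex
  -- Om is constant
  have hconst : ∀ r ⊆ P, r.card = m → ∀ r' ⊆ P, r'.card = m → Om r = Om r' := by
    intro r hr hrc r' hr' hrc'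
    refine const_of_swap P m Om ?_ r r' hr hrc hr' hrc'
    intro ρ hρ hρc
    have hins : ∀ b ∈ P, b ∉ ρ → insert b ρ ⊆ P ∧ (insert b ρ).card = m := by
      intro b hb hbρ
      refine ⟨Finset.insert_subset hb hρ, ?_⟩
      rw [Finset.card_insert_of_notMem hbρ, hρc]
    set M : E → E →ₗ[ℝ] E := fun b => Om (insert b ρ) with hM
    have hanti : ∀ b ∈ P, b ∉ ρ → ∀ x y, ⟪M b x, y⟫ = - ⟪x, M b y⟫ := fun b hb hbρ =>
      (hOm _ (hins b hb hbρ).1 (hins b hb hbρ).2).1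
    have hdiff : ∀ b ∈ P, b ∉ ρ → ∀ a ∈ P, a ∉ ρ → ∀ a' ∈ P, a' ∉ ρ → a ≠ b → a' ≠ b →
        v (insert a (insert b ρ)) - v (insert a' (insert b ρ)) = M b (a - a') := by
      intro b hb hbρ a ha haρ a' ha' haρ' hab hab'
      refine (hOm _ (hins b hb hbρ).1 (hins b hb hbρ).2).2 a ?_ a' ?_
      · simp [ha, haρ, hab]
      · simp [ha', haρ', hab']
    have hsym : ∀ b ∈ P, b ∉ ρ → ∀ b' ∈ P, b' ∉ ρ → ∀ a ∈ P, a ∉ ρ → ∀ a' ∈ P, a' ∉ ρ →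
        a ≠ b → a' ≠ b → a ≠ b' → a' ≠ b' →
        (M b - M b') (a - a') = (M a - M a') (b - b') := by
      intro b hb hbρ b' hb' hbρ' a ha haρ a' ha' haρ' h1 h2 h3 h4
      rw [LinearMap.sub_apply, LinearMap.sub_apply,
        ← hdiff b hb hbρ a ha haρ a' ha' haρ' h1 h2,
        ← hdiff b' hb' hbρ' a ha haρ a' ha' haρ' h3 h4,
        ← hdiff a ha haρ b hb hbρ b' hb' hbρ' h1.symm h3.symm,
        ← hdiff a' ha' haρ' b hb hbρ b' hb' hbρ' h2.symm h4.symm,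
        Finset.insert_comm a b, Finset.insert_comm a' b, Finset.insert_comm a b',
        Finset.insert_comm a' b']
      abel
    have hskew : ∀ b ∈ P, b ∉ ρ → ∀ b' ∈ P, b' ∉ ρ → ∀ x y,
        ⟪(M b - M b') x, y⟫ = - ⟪(M b - M b') y, x⟫ := by
      intro b hb hbρ b' hb' hbρ' x y
      rw [LinearMap.sub_apply, LinearMap.sub_apply, inner_sub_left, inner_sub_left,
        hanti b hb hbρ, hanti b' hb' hbρ', real_inner_comm x, real_inner_comm x]
      ring
    intro b hb hbρ b' hb' hbρ'
    change M b = M b'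
    rw [← sub_eq_zero]
    have hcP : (P \ ρ).card + ρ.card = P.card := Finset.card_sdiff_add_card_eq_card hρ
    -- key vanishing
    have key : ∀ a ∈ P, a ∉ ρ → ∀ a' ∈ P, a' ∉ ρ → a ≠ b → a' ≠ b → a ≠ b' → a' ≠ b' →
        (M b - M b') (a - a') = 0 := by
      intro a ha haρ a' ha' haρ' h1 h2 h3 h4
      refine hspan ((P \ ρ) \ {b, b', a, a'}) (Finset.sdiff_subset.trans Finset.sdiff_subset) ?_ _ ?_
      · have := Finset.le_card_sdiff ({b, b', a, a'} : Finset E) (P \ ρ)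
        have h4 : ({b, b', a, a'} : Finset E).card ≤ 4 := Finset.card_le_four
        omega
      · intro c hc c' hc'
        simp only [Finset.mem_sdiff, Finset.mem_insert, Finset.mem_singleton, not_or] at hc hc'
        obtain ⟨⟨hc, hcρ⟩, c1, c2, c3, c4⟩ := hc
        obtain ⟨⟨hc', hcρ'⟩, c5, c6, c7, c8⟩ := hc'
        have s12 := hsym b hb hbρ b' hb' hbρ' a ha haρ a' ha' haρ' h1 h2 h3 h4
        have s13 := hsym b hb hbρ b' hb' hbρ' c hc hcρ c' hc' hcρ' c1 c5 c2 c6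
        have s23 := hsym a ha haρ a' ha' haρ' c hc hcρ c' hc' hcρ' c3 c7 c4 c8
        have k1 := hskew b hb hbρ b' hb' hbρ' (a - a') (c - c')
        have k2 := hskew a ha haρ a' ha' haρ' (b - b') (c - c')
        have k3 := hskew c hc hcρ c' hc' hcρ' (b - b') (a - a')
        rw [s12] at k1
        rw [s13] at k1
        rw [s23] at k2
        rw [s12]
        linarith
    have key2 : ∀ x y, ⟪(M b - M b') x, y⟫ = 0 := by
      intro x y
      have : (M b - M b') y = 0 := by
        refine hspan ((P \ ρ) \ {b, b'}) (Finset.sdiff_subset.trans Finset.sdiff_subset) ?_ _ ?_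
        · have := Finset.le_card_sdiff ({b, b'} : Finset E) (P \ ρ)
          have h4 : ({b, b'} : Finset E).card ≤ 2 := Finset.card_le_two
          omega
        · intro c hc c' hc'
          simp only [Finset.mem_sdiff, Finset.mem_insert, Finset.mem_singleton, not_or] at hc hc'
          obtain ⟨⟨hc, hcρ⟩, c1, c2⟩ := hc
          obtain ⟨⟨hc', hcρ'⟩, c5, c6⟩ := hc'
          rw [hskew b hb hbρ b' hb' hbρ', key c hc hcρ c' hc' hcρ' c1 c5 c2 c6, inner_zero_left,
            neg_zero]
      rw [hskew b hb hbρ b' hb' hbρ', this, inner_zero_left, neg_zero]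
    ext1 x
    exact inner_self_eq_zero.1 (key2 x _)
  obtain ⟨r₀, hr₀, hr₀c⟩ := Finset.exists_subset_card_eq (show m ≤ P.card by omega)
  obtain ⟨s₀, hs₀, hs₀c⟩ := Finset.exists_subset_card_eq (show m + 1 ≤ P.card by omega)
  refine ⟨Om r₀, v s₀ - Om r₀ (∑ x ∈ s₀, x), (hOm r₀ hr₀ hr₀c).1, ?_⟩
  intro s hs hsc
  have := const_of_swap P (m + 1) (fun s => v s - Om r₀ (∑ x ∈ s, x)) (by
    intro ρ hρ hρc b hb hbρ b' hb' hbρ'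
    have h1 := (hOm ρ hρ (by omega)).2 b (by simp [hb, hbρ]) b' (by simp [hb', hbρ'])
    rw [hconst ρ hρ (by omega) r₀ hr₀ hr₀c] at h1
    simp only [Finset.sum_insert hbρ, Finset.sum_insert hbρ', map_add]
    rw [map_sub] at h1
    have : v (insert b ρ) = v (insert b' ρ) + (Om r₀ b - Om r₀ b') := by rw [← h1]; abel
    rw [this]; abel) s s₀ hs hsc hs₀ hs₀c
  exact sub_eq_iff_eq_add.1 this

end Rigid

section GeneralPosition

/-- A finite set of points in general position. -/
def GenPos {n : ℕ} (P : Finset (Euc n)) : Prop :=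
  ∀ t ⊆ P, t.card ≤ n + 1 → AffineIndependent ℝ (fun x : t => (x : Euc n))

lemma GenPos.mono {n : ℕ} {P Q : Finset (Euc n)} (h : GenPos P) (hQ : Q ⊆ P) : GenPos Q :=
  fun t ht hc => h t (ht.trans hQ) hc

lemma genPos_of_affineIndependent {n : ℕ} {P : Finset (Euc n)}
    (h : AffineIndependent ℝ (fun x : P => (x : Euc n))) : GenPos P := by
  intro t ht _
  exact h.mono (s := (t : Set (Euc n))) (t := (P : Set (Euc n))) (by exact_mod_cast ht)

lemma GenPos.span {n : ℕ} {P : Finset (Euc n)} (h : GenPos P) (t : Finset (Euc n)) (ht : t ⊆ P)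
    (hc : n + 1 ≤ t.card) (z : Euc n) (hz : ∀ a ∈ t, ∀ a' ∈ t, ⟪z, a - a'⟫ = 0) : z = 0 := by
  obtain ⟨t', ht', hc'⟩ := Finset.exists_subset_card_eq hc
  have h1 := h t' (ht'.trans ht) hc'.le
  have h2 := h1.vectorSpan_eq_top_of_card_eq_finrank_add_one (by simp [hc'])
  have h3 : z ∈ (vectorSpan ℝ (Set.range (fun x : t' => (x : Euc n))))ᗮ := by
    rw [Submodule.mem_orthogonal']
    intro u hu
    rw [vectorSpan] at hu
    induction hu using Submodule.span_induction with
    | mem x hx =>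
      obtain ⟨_, ⟨a, rfl⟩, _, ⟨b, rfl⟩, rfl⟩ := hx
      exact hz a (ht' a.2) b (ht' b.2)
    | zero => simp
    | add x y _ _ hx hy => rw [inner_add_right, hx, hy, add_zero]
    | smul c x _ hx => rw [inner_smul_right, hx, mul_zero]
  rw [h2] at h3
  simpa using h3

lemma affineSpan_ne_top_of_card {n : ℕ} (t : Finset (Euc n)) (hc : t.card ≤ n) :
    affineSpan ℝ (t : Set (Euc n)) ≠ ⊤ := by
  classical
  intro h
  rcases t.eq_empty_or_nonempty with rfl | hne
  · simp at h
  · have h1 : vectorSpan ℝ (t : Set (Euc n)) = ⊤ := by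
      rw [← direction_affineSpan, h, AffineSubspace.direction_top]
    have hpos := Finset.card_pos.2 hne
    have h2 := finrank_vectorSpan_image_finset_le ℝ (id : Euc n → Euc n) t
      (n := t.card - 1) (by omega)
    rw [Finset.image_id, h1, finrank_top] at h2
    simp at h2
    omega

open scoped Classical in
lemma genPos_extend {n : ℕ} (hn : 1 ≤ n) {ι : Type*} [Fintype ι] (P : ι → Finset (Euc n))
    (hP : ∀ i, GenPos (P i)) : ∃ x, ∀ i, x ∉ P i ∧ GenPos (insert x (P i)) := by
  let bad : Set (Euc n) :=
    ⋃ i, ⋃ t ∈ {t : Finset (Euc n) | t ⊆ P i ∧ t.card ≤ n}, (affineSpan ℝ (t : Set (Euc n)) : Set (Euc n))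
  have hbad : volume bad = 0 := by
    refine measure_iUnion_null fun i => ?_
    have hcnt : {t : Finset (Euc n) | t ⊆ P i ∧ t.card ≤ n}.Countable := by
      apply Set.Finite.countable
      apply Set.Finite.subset ((P i).powerset.finite_toSet)
      intro t ht
      simpa using ht.1
    rw [measure_biUnion_null_iff hcnt]
    intro t ht
    exact Measure.addHaar_affineSubspace _ _ (affineSpan_ne_top_of_card t ht.2)
  obtain ⟨x, hx⟩ : ∃ x, x ∉ bad := by
    by_contra hcon
    push Not at hcon
    have : bad = Set.univ := Set.eq_univ_of_forall hcon
    rw [this] at hbad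
    have : Nonempty (Euc n) := ⟨0⟩
    exact (Measure.measure_univ_ne_zero.2 (NeZero.ne _)) hbad
  have hx' : ∀ i, ∀ t ⊆ P i, t.card ≤ n → x ∉ affineSpan ℝ (t : Set (Euc n)) := by
    intro i t ht hc hmem
    apply hx
    simp only [bad, Set.mem_iUnion]
    exact ⟨i, t, ⟨ht, hc⟩, hmem⟩
  refine ⟨x, fun i => ⟨?_, ?_⟩⟩
  · intro hxi
    refine hx' i {x} (by simpa using hxi) (by simpa using hn) ?_
    exact subset_affineSpan ℝ _ (by simp)
  · intro t ht hc
    by_cases hxt : x ∈ t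
    · have hsub : t.erase x ⊆ P i := by
        intro y hy
        rcases Finset.mem_insert.1 (ht (Finset.mem_of_mem_erase hy)) with h | h
        · exact absurd h (Finset.ne_of_mem_erase hy)
        · exact h
      have hcard : (t.erase x).card ≤ n := by
        rw [Finset.card_erase_of_mem hxt]; omega
      have hi := hP i (t.erase x) hsub (by omega)
      refine AffineIndependent.affineIndependent_of_notMem_span (i := ⟨x, hxt⟩) ?_ ?_
      · let e : {y : t // y ≠ ⟨x, hxt⟩} ↪ (t.erase x) :=
          ⟨fun y => ⟨y.1.1, Finset.mem_erase.2 ⟨fun h => y.2 (Subtype.ext h), y.1.2⟩⟩, by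
            intro y y' h
            apply Subtype.ext; apply Subtype.ext
            exact congrArg (fun z : t.erase x => (z : Euc n)) h⟩
        exact hi.comp_embedding e
      · intro hmem
        refine hx' i _ hsub hcard (affineSpan_mono ℝ ?_ hmem)
        rintro _ ⟨y, hy, rfl⟩
        exact Finset.mem_coe.2 (Finset.mem_erase.2 ⟨fun h => hy (Subtype.ext h), y.2⟩)
    · refine hP i t ?_ hc
      intro y hy
      rcases Finset.mem_insert.1 (ht hy) with h | h
      · exact absurd (h ▸ hy) hxt
      · exact h

open scoped Classical in
lemma genPos_many {n : ℕ} (hn : 1 ≤ n) {ι : Type*} [Fintype ι] [Nonempty ι]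
    (P : ι → Finset (Euc n)) (hP : ∀ i, GenPos (P i)) (N : ℕ) :
    ∃ G : Finset (Euc n), G.card = N ∧ ∀ i, GenPos (P i ∪ G) := by
  induction N with
  | zero => exact ⟨∅, rfl, by simpa using hP⟩
  | succ N ih =>
    obtain ⟨G, hG, h⟩ := ih
    obtain ⟨x, hx⟩ := genPos_extend hn (fun i => P i ∪ G) h
    refine ⟨insert x G, ?_, ?_⟩
    · rw [Finset.card_insert_of_notMem, hG]
      obtain ⟨i⟩ := ‹Nonempty ι›
      exact fun hh => (hx i).1 (Finset.mem_union_right _ hh)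
    · intro i
      have := (hx i).2
      rwa [← Finset.union_insert] at this

end GeneralPosition

section Geometry

lemma vs_face_le {n K : ℕ} (b : Fin K → Euc n) (p : Fin K) :
    vectorSpan ℝ (Set.range (face b p)) ≤ vectorSpan ℝ (Set.range b) := by
  apply vectorSpan_mono
  rintro _ ⟨j, rfl⟩
  exact ⟨j.1, rfl⟩

lemma sub_mem_vs {n : ℕ} {ι : Type*} (c : ι → Euc n) (i j : ι) :
    c i - c j ∈ vectorSpan ℝ (Set.range c) :=
  vsub_mem_vectorSpan ℝ ⟨i, rfl⟩ ⟨j, rfl⟩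

lemma sub_mem_vs_face {n K : ℕ} (b : Fin K → Euc n) (p i j : Fin K) (hi : i ≠ p) (hj : j ≠ p) :
    b i - b j ∈ vectorSpan ℝ (Set.range (face b p)) :=
  sub_mem_vs (face b p) ⟨i, hi⟩ ⟨j, hj⟩

lemma sub_bary_mem {n : ℕ} {ι : Type*} [Fintype ι] (c : ι → Euc n) (j : ι) :
    c j - bary c ∈ vectorSpan ℝ (Set.range c) := by
  have hne : (Fintype.card ι : ℝ) ≠ 0 := by
    have : Nonempty ι := ⟨j⟩
    exact_mod_cast Fintype.card_ne_zero
  have : c j - bary c = (Fintype.card ι : ℝ)⁻¹ • ∑ i, (c j - c i) := by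
    rw [Finset.sum_sub_distrib, smul_sub, bary]
    congr 1
    rw [Finset.sum_const, Finset.card_univ, ← Nat.cast_smul_eq_nsmul ℝ, smul_smul,
      inv_mul_cancel₀ hne, one_smul]
  rw [this]
  exact Submodule.smul_mem _ _ (Submodule.sum_mem _ fun i _ => sub_mem_vs c j i)

lemma notMem_vs_face {n K : ℕ} (b : Fin K → Euc n) (hb : AffineIndependent ℝ b) (p q : Fin K)
    (hpq : q ≠ p) : b p - b q ∉ vectorSpan ℝ (Set.range (face b p)) := by
  intro h
  have h1 := hb.notMem_affineSpan_sdiff p Set.univ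
  apply h1
  have h2 : b '' (Set.univ \ {p}) = Set.range (face b p) := by
    ext x
    simp [face]
  rw [h2]
  have hq : b q ∈ affineSpan ℝ (Set.range (face b p)) :=
    subset_affineSpan ℝ _ ⟨⟨q, hpq⟩, rfl⟩
  have := AffineSubspace.vadd_mem_of_mem_direction (by rw [direction_affineSpan]; exact h) hq
  simpa using this

lemma exists_conormal {n K : ℕ} (b : Fin K → Euc n) (hb : AffineIndependent ℝ b) (p q : Fin K)
    (hpq : q ≠ p) : ∃ v, IsConormal b p v := by
  set W := vectorSpan ℝ (Set.range (face b p)) with hW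
  set x := b p - bary (face b p) with hx
  have hxq : x = (b p - b q) + (b q - bary (face b p)) := by rw [hx]; abel
  have hbq : b q - bary (face b p) ∈ W := sub_bary_mem (face b p) ⟨q, hpq⟩
  have hxW : x ∉ W := by
    intro h
    apply notMem_vs_face b hb p q hpq
    have : b p - b q = x - (b q - bary (face b p)) := by rw [hxq]; abel
    rw [this]
    exact W.sub_mem h hbq
  have hxV : x ∈ vectorSpan ℝ (Set.range b) := by
    rw [hxq]
    exact Submodule.add_mem _ (sub_mem_vs b p q) (vs_face_le b p hbq)
  set y := x - W.starProjection x with hy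
  have hyo : ∀ w ∈ W, ⟪y, w⟫ = 0 := fun w hw => by
    exact Submodule.starProjection_inner_eq_zero x w hw
  have hy0 : y ≠ 0 := by
    intro h
    apply hxW
    rw [sub_eq_zero.1 h]
    exact Submodule.starProjection_apply_mem W x
  have hyn : 0 < ‖y‖ := norm_pos_iff.2 hy0
  have hyx : ⟪y, x⟫ = ‖y‖ ^ 2 := by
    have : x = y + W.starProjection x := by rw [hy]; abel
    conv_lhs => rw [this]
    rw [inner_add_right, hyo _ (Submodule.starProjection_apply_mem W x), add_zero,
      real_inner_self_eq_norm_sq]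
  refine ⟨-(‖y‖⁻¹ • y), ?_, ?_, ?_, ?_⟩
  · refine Submodule.neg_mem _ (Submodule.smul_mem _ _ (Submodule.sub_mem _ hxV ?_))
    exact vs_face_le b p (Submodule.starProjection_apply_mem W x)
  · rw [norm_neg, norm_smul, norm_inv, norm_norm, inv_mul_cancel₀ hyn.ne']
  · intro w hw
    rw [inner_neg_left, real_inner_smul_left, hyo w hw, mul_zero, neg_zero]
  · rw [inner_neg_left, real_inner_smul_left, ← hx, hyx]
    have : 0 < ‖y‖⁻¹ * ‖y‖ ^ 2 := by positivity
    linarith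

lemma conormal_spec {n K : ℕ} (b : Fin K → Euc n) (hb : AffineIndependent ℝ b) (p q : Fin K)
    (hpq : q ≠ p) : IsConormal b p (conormal b p) := by
  have h := exists_conormal b hb p q hpq
  rw [conormal, dif_pos h]
  exact h.choose_spec

lemma IsConormal.inner_eq_zero {n K : ℕ} {b : Fin K → Euc n} {p : Fin K} {v : Euc n}
    (h : IsConormal b p v) (i j : Fin K) (hi : i ≠ p) (hj : j ≠ p) : ⟪v, b i - b j⟫ = 0 :=
  h.2.2.1 _ (sub_mem_vs_face b p i j hi hj)

lemma IsConormal.inner_neg {n K : ℕ} {b : Fin K → Euc n} {p : Fin K} {v : Euc n}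
    (h : IsConormal b p v) (j : Fin K) (hj : j ≠ p) : ⟪v, b p - b j⟫ < 0 := by
  have h1 := h.2.2.1 _ (sub_bary_mem (face b p) ⟨j, hj⟩)
  have h2 : b p - b j = (b p - bary (face b p)) - (b j - bary (face b p)) := by abel
  have h3 := h.2.2.2
  rw [h2, inner_sub_right]
  have h1' : ⟪v, b j - bary (face b p)⟫ = 0 := h1
  linarith

/-- The model of a simplex in its direction space. -/
def modelPt {n : ℕ} {ι : Type*} (c : ι → Euc n) (j : ι) :
    ι → vectorSpan ℝ (Set.range c) := fun i => ⟨c i - c j, sub_mem_vs c i j⟩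

lemma simplexSet_model {n : ℕ} {ι : Type*} (c : ι → Euc n) (j : ι) :
    simplexSet c = (fun w : vectorSpan ℝ (Set.range c) => (w : Euc n) + c j) ''
      convexHull ℝ (Set.range (modelPt c j)) := by
  let g : vectorSpan ℝ (Set.range c) →ᵃ[ℝ] Euc n :=
    (vectorSpan ℝ (Set.range c)).subtype.toAffineMap + AffineMap.const ℝ _ (c j)
  have hg : ⇑g = fun w : vectorSpan ℝ (Set.range c) => (w : Euc n) + c j := by
    ext w; simp [g]
  rw [← hg, AffineMap.image_convexHull, simplexSet]
  congr 1
  rw [← Set.range_comp]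
  congr 1
  funext i
  simp [hg, modelPt]

lemma measure_simplex_model {n : ℕ} {ι : Type*} (c : ι → Euc n) (j : ι) (d : ℝ) (hd : 0 ≤ d) :
    μH[d] (simplexSet c) = μH[d] (convexHull ℝ (Set.range (modelPt c j))) := by
  rw [simplexSet_model c j]
  apply Isometry.hausdorffMeasure_image _ (Or.inl hd)
  exact (IsometryEquiv.addRight (c j)).isometry.comp
    (vectorSpan ℝ (Set.range c)).subtypeₗᵢ.isometry

lemma measure_simplex_pos_finite {n : ℕ} {ι : Type*} [Fintype ι] (c : ι → Euc n) (j : ι)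
    (hc : AffineIndependent ℝ c) (d : ℝ) (hd : d + 1 = Fintype.card ι) :
    0 < (μH[d] (simplexSet c)).toReal := by
  obtain ⟨N, hN⟩ : ∃ N, Fintype.card ι = N + 1 := by
    have : Nonempty ι := ⟨j⟩
    exact Nat.exists_eq_add_one.2 Fintype.card_pos
  have hfin : Module.finrank ℝ (vectorSpan ℝ (Set.range c)) = N := hc.finrank_vectorSpan hN
  have hdN : d = (Module.finrank ℝ (vectorSpan ℝ (Set.range c)) : ℝ) := by
    rw [hfin]; rw [hN] at hd; push_cast at hd; linarith
  rw [measure_simplex_model c j d (by rw [hdN]; positivity), hdN]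
  have hcomp : IsCompact (convexHull ℝ (Set.range (modelPt c j))) :=
    Set.Finite.isCompact_convexHull (𝕜 := ℝ) (Set.finite_range _)
  have hint : (interior (convexHull ℝ (Set.range (modelPt c j)))).Nonempty := by
    rw [interior_convexHull_nonempty_iff_affineSpan_eq_top]
    have hmi : AffineIndependent ℝ (modelPt c j) := by
      let g : vectorSpan ℝ (Set.range c) →ᵃ[ℝ] Euc n :=
        (vectorSpan ℝ (Set.range c)).subtype.toAffineMap + AffineMap.const ℝ _ (c j)
      apply AffineIndependent.of_comp g
      have : g ∘ modelPt c j = c := by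
        ext1 i; simp [g, modelPt]
      rw [this]; exact hc
    rw [hmi.affineSpan_eq_top_iff_card_eq_finrank_add_one, hfin, hN]
  apply ENNReal.toReal_pos
  · exact (Measure.measure_pos_of_nonempty_interior _ hint).ne'
  · exact hcomp.measure_lt_top.ne

lemma inner_refl_aux {n : ℕ} (d x : Euc n) :
    ((ℝ ∙ d)ᗮ).reflection x = x - (2 * (⟪d, x⟫ / ‖d‖ ^ 2)) • d := by
  rw [Submodule.reflection_orthogonal_apply, Submodule.reflection_singleton_apply]
  simp only [neg_sub, RCLike.ofReal_real_eq_id, id_eq]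
  rw [← Nat.cast_smul_eq_nsmul ℝ, smul_smul]
  norm_num

lemma mem_vs_face {n K : ℕ} {b : Fin K → Euc n} {p q : Fin K} (hpq : q ≠ p) {v : Euc n}
    (h : IsConormal b p v) {x : Euc n} (hx : x ∈ vectorSpan ℝ (Set.range b)) (hxv : ⟪v, x⟫ = 0) :
    x ∈ vectorSpan ℝ (Set.range (face b p)) := by
  have hle : vectorSpan ℝ (Set.range b) ≤
      vectorSpan ℝ (Set.range (face b p)) ⊔ (ℝ ∙ (b p - b q)) := by
    rw [vectorSpan_range_eq_span_range_vsub_right ℝ b q, Submodule.span_le]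
    rintro _ ⟨i, rfl⟩
    by_cases hi : i = p
    · subst hi
      exact Submodule.mem_sup_right (Submodule.mem_span_singleton_self _)
    · exact Submodule.mem_sup_left (sub_mem_vs_face b p i q hi hpq)
  obtain ⟨w, hw, y, hy, rfl⟩ := Submodule.mem_sup.1 (hle hx)
  obtain ⟨t, rfl⟩ := Submodule.mem_span_singleton.1 hy
  rw [inner_add_right, h.2.2.1 w hw, zero_add, inner_smul_right] at hxv
  have ht : t = 0 := (mul_eq_zero.1 hxv).resolve_right (h.inner_neg q hpq).ne
  rw [ht, zero_smul, add_zero]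
  exact hw

lemma face_ratio {n K : ℕ} (b : Fin K → Euc n) (hb : AffineIndependent ℝ b) (p q : Fin K)
    (hpq : q ≠ p) (d : ℝ) (hd : d = (K : ℝ) - 2) :
    (μH[d] (simplexSet (face b q))).toReal * ⟪conormal b q, b p - b q⟫ =
      - ((μH[d] (simplexSet (face b p))).toReal * ⟪conormal b p, b p - b q⟫) := by
  have hp := conormal_spec b hb p q hpq
  have hq := conormal_spec b hb q p hpq.symm
  set P := conormal b p
  set Q := conormal b q
  set u := b p - b q with hu
  have hPu : ⟪P, u⟫ < 0 := hp.inner_neg q hpq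
  have hQu : 0 < ⟪Q, u⟫ := by
    have := hq.inner_neg p hpq.symm
    rw [← neg_sub, inner_neg_right] at this
    linarith
  set W := vectorSpan ℝ (Set.range (face b p)) with hW
  set D := P - Q with hD
  have hD0 : D ≠ 0 := by
    intro h
    rw [sub_eq_zero] at h
    rw [h] at hPu
    linarith
  have hDn : 0 < ‖D‖ ^ 2 := by have := norm_pos_iff.2 hD0; positivity
  have hPP : ⟪P, P⟫ = 1 := by rw [real_inner_self_eq_norm_sq, hp.2.1]; norm_num
  have hQQ : ⟪Q, Q⟫ = 1 := by rw [real_inner_self_eq_norm_sq, hq.2.1]; norm_num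
  have hDD : ‖D‖ ^ 2 = 2 - 2 * ⟪P, Q⟫ := by
    rw [← real_inner_self_eq_norm_sq, hD]
    simp only [inner_sub_left, inner_sub_right, hPP, hQQ, real_inner_comm P Q]
    ring
  have hPD : ⟪P, D⟫ = ‖D‖ ^ 2 / 2 := by rw [hDD, hD, inner_sub_right, hPP]; ring
  have hQD : ⟪Q, D⟫ = - (‖D‖ ^ 2 / 2) := by
    rw [hDD, hD, inner_sub_right, hQQ, real_inner_comm P Q]; ring
  set ρ := ((ℝ ∙ D)ᗮ).reflection with hρ
  have hρx : ∀ x, ρ x = x - (2 * (⟪D, x⟫ / ‖D‖ ^ 2)) • D := inner_refl_aux D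
  have hDu : ⟪D, u⟫ = ⟪P, u⟫ - ⟪Q, u⟫ := by rw [hD, inner_sub_left]
  have hPρ : ⟪P, ρ u⟫ = ⟪Q, u⟫ := by
    rw [hρx, inner_sub_right, inner_smul_right, hPD, hDu]
    field_simp
    ring
  have hQρ : ⟪Q, ρ u⟫ = ⟪P, u⟫ := by
    rw [hρx, inner_sub_right, inner_smul_right, hQD, hDu]
    field_simp
    ring
  set z : Euc n := (2 / ‖D‖ ^ 2) • D - (1 / ⟪Q, u⟫) • ρ u with hz
  have hDV : D ∈ vectorSpan ℝ (Set.range b) := Submodule.sub_mem _ hp.1 hq.1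
  have huV : u ∈ vectorSpan ℝ (Set.range b) := sub_mem_vs b p q
  have hzV : z ∈ vectorSpan ℝ (Set.range b) := by
    refine Submodule.sub_mem _ (Submodule.smul_mem _ _ hDV) (Submodule.smul_mem _ _ ?_)
    rw [hρx]
    exact Submodule.sub_mem _ huV (Submodule.smul_mem _ _ hDV)
  have hPz : ⟪P, z⟫ = 0 := by
    rw [hz, inner_sub_right, inner_smul_right, inner_smul_right, hPD, hPρ]
    field_simp
    ring
  have hQz : ⟪Q, z⟫ = -1 - ⟪P, u⟫ / ⟪Q, u⟫ := by
    rw [hz, inner_sub_right, inner_smul_right, inner_smul_right, hQD, hQρ]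
    field_simp
  have hzW : z ∈ W := mem_vs_face hpq hp hzV hPz
  let f : Module.Dual ℝ W := (innerₛₗ ℝ Q) ∘ₗ W.subtype
  have hf : ∀ w : W, f w = ⟪Q, (w : Euc n)⟫ := fun w => rfl
  let T : W →ₗ[ℝ] W := LinearMap.transvection f ⟨z, hzW⟩
  have hTdet : LinearMap.det T = - ⟪P, u⟫ / ⟪Q, u⟫ := by
    rw [LinearMap.transvection.det, hf]
    change 1 + ⟪Q, z⟫ = _
    rw [hQz]; ring
  have hT : ∀ w : W, ((T w : W) : Euc n) = w + ⟪Q, (w : Euc n)⟫ • z := fun w => rfl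
  -- the affine map taking the model of face p onto face q
  let L : W →ₗ[ℝ] Euc n := W.subtype - (f.smulRight ((1 / ⟪Q, u⟫) • u))
  have hL : ∀ w : W, L w = w - (⟪Q, (w : Euc n)⟫ / ⟪Q, u⟫) • u := by
    intro w
    simp only [L, LinearMap.sub_apply, LinearMap.smulRight_apply, hf, smul_smul,
      Submodule.subtype_apply]
    congr 2
    ring
  have hρL : ∀ w : W, ρ (L w) = T w := by
    intro w
    have hPw : ⟪P, (w : Euc n)⟫ = 0 := hp.2.2.1 w w.2
    have hDw : ⟪D, (w : Euc n)⟫ = - ⟪Q, (w : Euc n)⟫ := by rw [hD, inner_sub_left, hPw]; ring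
    rw [hL, map_sub, map_smul, hρx w, hDw, hT, hz]
    generalize ρ u = y
    module
  let g : W →ᵃ[ℝ] Euc n := L.toAffineMap + AffineMap.const ℝ _ (b p)
  have hg : ∀ w, g w = L w + b p := fun w => by simp [g]
  let C : Set W := convexHull ℝ (Set.range (modelPt (face b p) ⟨q, hpq⟩))
  have hmodel : ∀ i (hi : i ≠ p), i ≠ q → g (modelPt (face b p) ⟨q, hpq⟩ ⟨i, hi⟩) = b i := by
    intro i hi hiq
    rw [hg, hL]
    change (b i - b q) - (⟪Q, b i - b q⟫ / ⟪Q, u⟫) • u + b p = b i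
    have h1 : b i - b q = (b i - b p) + u := by rw [hu]; abel
    have h2 : ⟪Q, b i - b q⟫ = ⟪Q, u⟫ := by
      rw [h1, inner_add_right, hq.inner_eq_zero i p hiq hpq.symm, zero_add]
    rw [h2, div_self hQu.ne', one_smul, h1]
    abel
  have hmodelq : g (modelPt (face b p) ⟨q, hpq⟩ ⟨q, hpq⟩) = b p := by
    rw [hg, hL]
    change (b q - b q) - (⟪Q, b q - b q⟫ / ⟪Q, u⟫) • u + b p = b p
    simp
  have hgC : g '' C = simplexSet (face b q) := by
    rw [AffineMap.image_convexHull, simplexSet]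
    congr 1
    ext x
    constructor
    · rintro ⟨_, ⟨⟨i, hi⟩, rfl⟩, rfl⟩
      by_cases hiq : i = q
      · subst hiq
        rw [hmodelq]
        exact ⟨⟨p, hpq.symm⟩, rfl⟩
      · rw [hmodel i hi hiq]
        exact ⟨⟨i, hiq⟩, rfl⟩
    · rintro ⟨⟨i, hi⟩, rfl⟩
      by_cases hip : i = p
      · subst hip
        exact ⟨_, ⟨⟨q, hpq⟩, rfl⟩, hmodelq⟩
      · exact ⟨_, ⟨⟨i, hip⟩, rfl⟩, hmodel i hip hi⟩
  have hK : Fintype.card {j : Fin K // j ≠ p} = (K - 2) + 1 := by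
    have h1 : p.1 ≠ q.1 := fun h => hpq (Fin.ext h.symm)
    have h2 := p.2
    have h3 := q.2
    simp only [ne_eq, Fintype.card_subtype_compl, Fintype.card_fin, Fintype.card_unique]
    omega
  have hK2 : 2 ≤ K := by
    have h1 : p.1 ≠ q.1 := fun h => hpq (Fin.ext h.symm)
    have h2 := p.2
    have h3 := q.2
    omega
  have hfi : AffineIndependent ℝ (face b p) := hb.subtype {j | j ≠ p}
  have hfin : Module.finrank ℝ W = K - 2 := hfi.finrank_vectorSpan hK
  have hdW : d = (Module.finrank ℝ W : ℝ) := by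
    rw [hfin, hd, Nat.cast_sub hK2]; norm_num
  have hd0 : 0 ≤ d := by rw [hdW]; positivity
  have hm1 : μH[d] (simplexSet (face b q)) = ENNReal.ofReal |LinearMap.det T| * μH[d] C := by
    rw [← hgC]
    have hcomp : (fun y => ρ (y - b p)) '' (g '' C) = W.subtypeₗᵢ '' (T '' C) := by
      rw [Set.image_image, Set.image_image]
      apply Set.image_congr
      intro w _
      rw [hg, add_sub_cancel_right, hρL]
      rfl
    have hiso : Isometry (fun y => ρ (y - b p)) :=
      ρ.isometry.comp (IsometryEquiv.subRight (b p)).isometry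
    rw [← hiso.hausdorffMeasure_image (Or.inl hd0), hcomp,
      W.subtypeₗᵢ.isometry.hausdorffMeasure_image (Or.inl hd0), hdW,
      Measure.addHaar_image_linearMap]
  have hm2 : μH[d] (simplexSet (face b p)) = μH[d] C :=
    measure_simplex_model (face b p) ⟨q, hpq⟩ d hd0
  rw [hm1, hm2, ENNReal.toReal_mul, ENNReal.toReal_ofReal (abs_nonneg _), hTdet,
    abs_of_pos (div_pos (by linarith) hQu)]
  field_simp

end Geometry

section Assembly

lemma matVec_rankOne {n : ℕ} (u v : Euc n) : matVec (rankOne u) v = ⟪v, u⟫ • u := by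
  ext i
  simp only [matVec, rankOne, Matrix.toLpLin_apply, PiLp.smul_apply, smul_eq_mul,
    PiLp.inner_apply, Matrix.mulVec, dotProduct, Matrix.of_apply, RCLike.inner_apply, conj_trivial]
  rw [Finset.sum_mul]
  exact Finset.sum_congr rfl fun j _ => by ring

lemma matVec_smul {n : ℕ} (c : ℝ) (A : Matrix (Fin n) (Fin n) ℝ) (v : Euc n) :
    matVec (c • A) v = c • matVec A v := by
  simp [matVec]

lemma beam_smul {n K : ℕ} (c : ℝ) (A : Matrix (Fin n) (Fin n) ℝ) (b : Fin K → Euc n)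
    (S : Set (Euc n)) : beam (c • A) b S = c • beam A b S := by
  simp only [beam, matVec_smul, Finset.smul_sum]
  exact Finset.sum_congr rfl fun i _ => smul_comm _ _ _

/-- The submodule of all beam sums. -/
def beamSub (n K : ℕ) : Submodule ℝ (Set (Euc n) → Euc n) where
  carrier := {G | IsBeamSum K G}
  zero_mem' := ⟨0, Fin.elim0, Fin.elim0, fun j => j.elim0, fun j => j.elim0, fun j => j.elim0, by
    ext1 S; simp⟩
  add_mem' := by
    rintro G G' ⟨m, τ, A, h1, h2, h3, rfl⟩ ⟨m', τ', A', h1', h2', h3', rfl⟩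
    refine ⟨m + m', Fin.append τ τ', Fin.append A A', ?_, ?_, ?_, ?_⟩
    · intro j
      refine Fin.addCases (fun i => ?_) (fun i => ?_) j
      · rw [Fin.append_left]; exact h1 i
      · rw [Fin.append_right]; exact h1' i
    · intro j
      refine Fin.addCases (fun i => ?_) (fun i => ?_) j
      · rw [Fin.append_left]; exact h2 i
      · rw [Fin.append_right]; exact h2' i
    · intro j
      refine Fin.addCases (fun i => ?_) (fun i => ?_) j
      · rw [Fin.append_left, Fin.append_left]; exact h3 i
      · rw [Fin.append_right, Fin.append_right]; exact h3' i
    · ext1 S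
      simp [Fin.sum_univ_add]
  smul_mem' := by
    rintro c G ⟨m, τ, A, h1, h2, h3, rfl⟩
    refine ⟨m, τ, fun j => c • A j, h1, fun j => (h2 j).smul c, ?_, ?_⟩
    · intro j v
      rw [matVec_smul]
      exact Submodule.smul_mem _ _ (h3 j v)
    · ext1 S
      simp [beam_smul, Finset.smul_sum]

lemma beam_mem {n K : ℕ} (A : Matrix (Fin n) (Fin n) ℝ) (b : Fin K → Euc n)
    (hb : AffineIndependent ℝ b) (hA : A.IsSymm) (hs : Structural A b) :
    beam A b ∈ beamSub n K :=
  ⟨1, fun _ => b, fun _ => A, fun _ => hb, fun _ => hA, fun _ => hs, by ext1 S; simp⟩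

lemma beam_edge {n K : ℕ} (b : Fin K → Euc n) (hb : AffineIndependent ℝ b) (p q : Fin K)
    (hpq : q ≠ p) (S : Set (Euc n)) :
    beam (rankOne (b p - b q)) b S =
      ((μH[(K : ℝ) - 2] (S ∩ simplexSet (face b p))).toReal * ⟪conormal b p, b p - b q⟫ +
       (μH[(K : ℝ) - 2] (S ∩ simplexSet (face b q))).toReal * ⟪conormal b q, b p - b q⟫)
        • (b p - b q) := by
  rw [beam, Finset.sum_eq_add p q hpq.symm]
  · rw [matVec_rankOne, matVec_rankOne, smul_smul, smul_smul, add_smul]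
  · rintro i - ⟨hip, hiq⟩
    have hi := conormal_spec b hb i p hip.symm
    rw [matVec_rankOne, hi.inner_eq_zero p q hip.symm hiq.symm, zero_smul, smul_zero]
  · simp
  · simp

/-- The normalized uniform load `f` on the convex hull of `t`. -/
def dl {n : ℕ} (d : ℝ) (t : Finset (Euc n)) : Euc n →ₗ[ℝ] (Set (Euc n) → Euc n) where
  toFun f := fun S => ((μH[d] (S ∩ convexHull ℝ (t : Set (Euc n)))).toReal /
    (μH[d] (convexHull ℝ (t : Set (Euc n)))).toReal) • f
  map_add' x y := by ext1 S; simp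
  map_smul' c x := by ext1 S; simp [smul_comm c]

open scoped Classical in
lemma flex_mem {n k : ℕ} (T : Finset (Euc n)) (hT : T.card = k + 1)
    (hTi : AffineIndependent ℝ (fun x : T => (x : Euc n))) (a a' : Euc n) (ha : a ∈ T)
    (ha' : a' ∈ T) (hne : a ≠ a') :
    dl ((k : ℝ) - 1) (T.erase a') (a - a') - dl ((k : ℝ) - 1) (T.erase a) (a - a')
      ∈ beamSub n (k + 1) := by
  let e := T.equivFinOfCardEq hT
  let b : Fin (k + 1) → Euc n := fun i => (e.symm i : Euc n)
  have hb : AffineIndependent ℝ b := hTi.comp_embedding e.symm.toEmbedding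
  let p := e ⟨a, ha⟩
  let q := e ⟨a', ha'⟩
  have hbp : b p = a := by simp [b, p]
  have hbq : b q = a' := by simp [b, q]
  have hpq : q ≠ p := by
    intro h
    apply hne
    rw [← hbp, ← hbq, h]
  have hd : (((k + 1 : ℕ) : ℝ)) - 2 = (k : ℝ) - 1 := by push_cast; ring
  have hface : ∀ (x : Euc n) (hx : x ∈ T), simplexSet (face b (e ⟨x, hx⟩)) =
      convexHull ℝ ((T.erase x : Finset (Euc n)) : Set (Euc n)) := by
    intro x hx
    rw [simplexSet]
    congr 1
    ext y
    simp only [Set.mem_range, Finset.coe_erase, Set.mem_sdiff, Finset.mem_coe,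
      Set.mem_singleton_iff]
    constructor
    · rintro ⟨⟨i, hi⟩, rfl⟩
      refine ⟨(e.symm i).2, fun h => hi ?_⟩
      apply e.symm.injective
      rw [Equiv.symm_apply_apply]
      exact Subtype.ext h
    · rintro ⟨hy, hyx⟩
      refine ⟨⟨e ⟨y, hy⟩, fun h => hyx ?_⟩, ?_⟩
      · exact congrArg Subtype.val (e.injective h)
      · simp [face, b]
  have hmem := beam_mem (rankOne (b p - b q)) b hb
    (by
      ext i j
      simp [rankOne, mul_comm])
    (by
      intro v
      rw [matVec_rankOne]
      exact Submodule.smul_mem _ _ (sub_mem_vs b p q))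
  have hratio := face_ratio b hb p q hpq ((k : ℝ) - 1) hd.symm
  have hcard : ∀ i : Fin (k + 1), ((k : ℝ) - 1) + 1 = Fintype.card {j : Fin (k + 1) // j ≠ i} := by
    intro i
    simp
  have hHp := measure_simplex_pos_finite (face b p) ⟨q, hpq⟩ (hb.subtype {j | j ≠ p}) _ (hcard p)
  have hHq := measure_simplex_pos_finite (face b q) ⟨p, hpq.symm⟩ (hb.subtype {j | j ≠ q}) _
    (hcard q)
  have hQu : ⟪conormal b q, b p - b q⟫ ≠ 0 := by
    have := (conormal_spec b hb q p hpq.symm).inner_neg p hpq.symm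
    rw [← neg_sub, inner_neg_right] at this
    intro h
    rw [h] at this
    simp at this
  set Hp := (μH[(k : ℝ) - 1] (simplexSet (face b p))).toReal with hHp'
  set Hq := (μH[(k : ℝ) - 1] (simplexSet (face b q))).toReal with hHq'
  set κ := Hq * ⟪conormal b q, b p - b q⟫ with hκ
  have hκ0 : κ ≠ 0 := mul_ne_zero hHq.ne' hQu
  have heq : dl ((k : ℝ) - 1) (T.erase a') (a - a') - dl ((k : ℝ) - 1) (T.erase a) (a - a') =
      κ⁻¹ • beam (rankOne (b p - b q)) b := by
    ext1 S
    rw [Pi.sub_apply, Pi.smul_apply, beam_edge b hb p q hpq S, hd]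
    simp only [dl, LinearMap.coe_mk, AddHom.coe_mk]
    rw [← hface a ha, ← hface a' ha', ← sub_smul, smul_smul, hbp, hbq]
    change ((μH[(k : ℝ) - 1] (S ∩ simplexSet (face b q))).toReal / Hq -
      (μH[(k : ℝ) - 1] (S ∩ simplexSet (face b p))).toReal / Hp) • _ = _
    congr 1
    rw [hbp, hbq] at hratio hκ hQu
    have hP : ⟪conormal b p, a - a'⟫ = - κ / Hp := by
      rw [eq_div_iff hHp.ne']; linarith
    have hQ : ⟪conormal b q, a - a'⟫ = κ / Hq := by
      rw [eq_div_iff hHq.ne']; linarith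
    rw [hP, hQ]
    field_simp
    ring
  rw [heq]
  exact Submodule.smul_mem _ _ hmem

lemma torque_zero {n l : ℕ} (Ω : Euc n →ₗ[ℝ] Euc n) (hΩ : ∀ x y, ⟪Ω x, y⟫ = - ⟪x, Ω y⟫)
    (h : Fin l → ℝ) (c F : Fin l → Euc n) (hw : ∑ i, h i • wedge (c i) (F i) = 0) :
    ∑ i, h i * ⟪Ω (c i), F i⟫ = 0 := by
  let e := EuclideanSpace.basisFun (Fin n) ℝ
  let ψ : Matrix (Fin n) (Fin n) ℝ → ℝ := fun A => ∑ p, ∑ q, ⟪Ω (e p), e q⟫ * A p q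
  have hexp : ∀ x y : Euc n, ⟪Ω x, y⟫ = ∑ p, ∑ q, ⟪Ω (e p), e q⟫ * (x p * y q) := by
    intro x y
    have hx : x = ∑ p, x p • e p := by
      conv_lhs => rw [← e.sum_repr x]
      simp [e]
    have hy : y = ∑ p, y p • e p := by
      conv_lhs => rw [← e.sum_repr y]
      simp [e]
    conv_lhs => rw [hx, hy]
    simp only [map_sum, map_smul, sum_inner, inner_sum, real_inner_smul_left,
      real_inner_smul_right]
    rw [Finset.sum_comm]
    exact Finset.sum_congr rfl fun p _ => Finset.sum_congr rfl fun q _ => by ring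
  have hψ : ∀ x y : Euc n, ψ (wedge x y) = 2 * ⟪Ω x, y⟫ := by
    intro x y
    have h1 : ⟪Ω y, x⟫ = - ⟪Ω x, y⟫ := by rw [hΩ, real_inner_comm]
    have h2 : ψ (wedge x y) = ⟪Ω x, y⟫ - ⟪Ω y, x⟫ := by
      rw [hexp x y, hexp y x, ← Finset.sum_sub_distrib]
      refine Finset.sum_congr rfl fun p _ => ?_
      rw [← Finset.sum_sub_distrib]
      refine Finset.sum_congr rfl fun q _ => ?_
      simp only [wedge, Matrix.of_apply]
      ring
    rw [h2, h1]; ring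
  have h3 : ψ (∑ i, h i • wedge (c i) (F i)) = ∑ i, h i * ψ (wedge (c i) (F i)) := by
    simp only [ψ, Matrix.sum_apply, Matrix.smul_apply, smul_eq_mul, Finset.mul_sum]
    symm
    rw [Finset.sum_comm]
    refine Finset.sum_congr rfl fun p _ => ?_
    rw [Finset.sum_comm]
    refine Finset.sum_congr rfl fun q _ => Finset.sum_congr rfl fun i _ => ?_
    ring
  rw [hw] at h3
  simp only [hψ] at h3
  have h4 : ψ 0 = 0 := by simp [ψ]
  rw [h4] at h3
  have : ∑ i, h i * (2 * ⟪Ω (c i), F i⟫) = 2 * ∑ i, h i * ⟪Ω (c i), F i⟫ := by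
    rw [Finset.mul_sum]
    exact Finset.sum_congr rfl fun i _ => by ring
  linarith

end Assembly

section Final

open scoped Classical in
/-- Two infinitesimal rigid motions describing the same field on a set in general position
coincide. -/
lemma rigid_unique {n m : ℕ} (G : Finset (Euc n)) (hG : GenPos G) (hc : m + n + 10 ≤ G.card)
    (v : Finset (Euc n) → Euc n) (Ω Ω' : Euc n →ₗ[ℝ] Euc n) (v₀ v₀' : Euc n)
    (hΩ : ∀ x y, ⟪Ω x, y⟫ = - ⟪x, Ω y⟫) (hΩ' : ∀ x y, ⟪Ω' x, y⟫ = - ⟪x, Ω' y⟫)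
    (h : ∀ s ⊆ G, s.card = m + 1 → v s = v₀ + Ω (∑ x ∈ s, x))
    (h' : ∀ s ⊆ G, s.card = m + 1 → v s = v₀' + Ω' (∑ x ∈ s, x)) : Ω' = Ω ∧ v₀' = v₀ := by
  have hdiff : ∀ a ∈ G, ∀ a' ∈ G, Ω' (a - a') = Ω (a - a') := by
    intro a ha a' ha'
    obtain ⟨ρ, hρ, hρc⟩ := Finset.exists_subset_card_eq
      (s := (G.erase a).erase a') (n := m) (by
        have h1 := Finset.pred_card_le_card_erase (s := G) (a := a)
        have h2 := Finset.pred_card_le_card_erase (s := G.erase a) (a := a')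
        omega)
    have hρG : ρ ⊆ G := hρ.trans ((Finset.erase_subset _ _).trans (Finset.erase_subset _ _))
    have hna : a ∉ ρ := fun hh => by
      have := hρ hh
      simp at this
    have hna' : a' ∉ ρ := fun hh => by
      have := hρ hh
      simp at this
    have e1 := h (insert a ρ) (Finset.insert_subset ha hρG)
      (by rw [Finset.card_insert_of_notMem hna, hρc])
    have e2 := h (insert a' ρ) (Finset.insert_subset ha' hρG)
      (by rw [Finset.card_insert_of_notMem hna', hρc])
    have e3 := h' (insert a ρ) (Finset.insert_subset ha hρG)
      (by rw [Finset.card_insert_of_notMem hna, hρc])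
    have e4 := h' (insert a' ρ) (Finset.insert_subset ha' hρG)
      (by rw [Finset.card_insert_of_notMem hna', hρc])
    rw [Finset.sum_insert hna, map_add] at e1 e3
    rw [Finset.sum_insert hna', map_add] at e2 e4
    have f1 : v (insert a ρ) - v (insert a' ρ) = Ω (a - a') := by
      rw [e1, e2, map_sub]; abel
    have f2 : v (insert a ρ) - v (insert a' ρ) = Ω' (a - a') := by
      rw [e3, e4, map_sub]; abel
    rw [← f1, ← f2]
  have hΩe : Ω' = Ω := by
    ext1 x
    rw [← sub_eq_zero]
    refine hG.span G subset_rfl (by omega) _ fun a ha a' ha' => ?_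
    rw [inner_sub_left, hΩ', hΩ, hdiff a ha a' ha', sub_self]
  refine ⟨hΩe, ?_⟩
  obtain ⟨ρ, hρ, hρc⟩ := Finset.exists_subset_card_eq (s := G) (n := m + 1) (by omega)
  have e1 := h ρ hρ hρc
  have e2 := h' ρ hρ hρc
  rw [hΩe, e1] at e2
  exact (add_right_cancel e2).symm

open scoped Classical in
lemma functional_rigid {n m : ℕ} (hn : m + 2 ≤ n) (φ : (Set (Euc n) → Euc n) →ₗ[ℝ] ℝ)
    (hφ : beamSub n (m + 1 + 1) ≤ LinearMap.ker φ) {l : ℕ} (t : Fin l → Finset (Euc n))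
    (htc : ∀ i, (t i).card = m + 1)
    (ht : ∀ i, AffineIndependent ℝ (fun x : t i => (x : Euc n))) :
    ∃ (Ω : Euc n →ₗ[ℝ] Euc n) (v₀ : Euc n), (∀ x y, ⟪Ω x, y⟫ = - ⟪x, Ω y⟫) ∧
      ∀ i f, φ (dl (((m + 1 : ℕ) : ℝ) - 1) (t i) f) = ⟪v₀ + Ω (∑ x ∈ t i, x), f⟫ := by
  let d : ℝ := ((m + 1 : ℕ) : ℝ) - 1
  let v : Finset (Euc n) → Euc n := fun t => (InnerProductSpace.toDual ℝ (Euc n)).symm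
    (LinearMap.toContinuousLinearMap (φ ∘ₗ dl d t))
  have hvi : ∀ t f, ⟪v t, f⟫ = φ (dl d t f) := by
    intro t f
    simp only [v]
    rw [InnerProductSpace.toDual_symm_apply]
    rfl
  have hflex : ∀ P : Finset (Euc n), GenPos P → ∀ r ⊆ P, r.card = m → ∀ a ∈ P, a ∉ r →
      ∀ a' ∈ P, a' ∉ r → ⟪v (insert a r) - v (insert a' r), a - a'⟫ = 0 := by
    intro P hP r hr hrc a ha har a' ha' har'
    by_cases hne : a = a'
    · subst hne; simp
    have hcard : (insert a (insert a' r)).card = m + 1 + 1 := by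
      rw [Finset.card_insert_of_notMem (by simp [hne, har]),
        Finset.card_insert_of_notMem har', hrc]
    have hmem := flex_mem (insert a (insert a' r)) hcard
      (hP _ (Finset.insert_subset ha (Finset.insert_subset ha' hr)) (by omega)) a a'
      (by simp) (by simp) hne
    have e1 : (insert a (insert a' r)).erase a = insert a' r :=
      Finset.erase_insert (by simp [hne, har])
    have e2 : (insert a (insert a' r)).erase a' = insert a r := by
      rw [Finset.insert_comm]
      exact Finset.erase_insert (by simp [Ne.symm hne, har'])
    rw [e1, e2] at hmem
    have h0 := LinearMap.mem_ker.1 (hφ hmem)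
    rw [map_sub] at h0
    rw [inner_sub_left, hvi, hvi]
    exact h0
  let P : Option (Fin l) → Finset (Euc n) := fun o => o.elim ∅ t
  have hP : ∀ o, GenPos (P o) := by
    rintro (_ | i)
    · intro s hs _
      have : s = ∅ := Finset.subset_empty.1 hs
      subst this
      exact affineIndependent_of_subsingleton ℝ _
    · exact genPos_of_affineIndependent (ht i)
  obtain ⟨G, hGc, hG⟩ := genPos_many (by omega) P hP (m + n + 10)
  have hG0 : GenPos G := (hG none).mono Finset.subset_union_right
  obtain ⟨Ω, v₀, hΩ, hv⟩ := core_rigid n m G hGc.ge (fun t ht hc z hz => hG0.span t ht hc z hz) v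
    (hflex G hG0)
  refine ⟨Ω, v₀, hΩ, fun i f => ?_⟩
  have hGi : GenPos (t i ∪ G) := hG (some i)
  obtain ⟨Ω', v₀', hΩ', hv'⟩ := core_rigid n m (t i ∪ G)
    (hGc.ge.trans (Finset.card_le_card Finset.subset_union_right))
    (fun t ht hc z hz => hGi.span t ht hc z hz) v (hflex _ hGi)
  obtain ⟨rfl, rfl⟩ := rigid_unique (m := m) G hG0 hGc.ge v Ω Ω' v₀ v₀' hΩ hΩ' hv
    (fun s hs => hv' s (hs.trans Finset.subset_union_right))
  rw [← hv' (t i) Finset.subset_union_left (htc i), hvi]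

end Final

/-- Every equilibrium system of forces on `(k−1)`-simplices in `ℝⁿ`
(`k ≥ 1`, `n ≥ k + 1`) is a finite sum of `k`-beams with symmetric coefficient
matrices structural for their simplices.  Here a `(k−1)`-simplex is recorded by its
`k` vertices, and a `k`-simplex by its `k + 1` vertices. -/
theorem statement2 {k n l : ℕ} (hk : 1 ≤ k) (hn : k + 1 ≤ n)
    (s : Fin l → Fin k → Euc n) (hs : ∀ i, AffineIndependent ℝ (s i))
    (F : Fin l → Euc n)
    (hequil : equil ((k : ℝ) - 1) s F) :
    IsBeamSum (k + 1) (sys ((k : ℝ) - 1) s F) := by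
  classical
  obtain ⟨m, rfl⟩ : ∃ m, k = m + 1 := Nat.exists_eq_add_one.2 hk
  change sys _ s F ∈ beamSub n (m + 1 + 1)
  by_contra hnot
  obtain ⟨φ, hφne, hφ⟩ := Submodule.exists_le_ker_of_notMem hnot
  apply hφne
  let t : Fin l → Finset (Euc n) := fun i => Finset.univ.image (s i)
  have htr : ∀ i, ((t i : Finset (Euc n)) : Set (Euc n)) = Set.range (s i) := by
    intro i; simp [t]
  have hconv : ∀ i, convexHull ℝ ((t i : Finset (Euc n)) : Set (Euc n)) = simplexSet (s i) := by
    intro i; rw [htr]; rfl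
  have htc : ∀ i, (t i).card = m + 1 := by
    intro i
    rw [Finset.card_image_of_injective _ (hs i).injective]
    simp
  have hti : ∀ i, AffineIndependent ℝ (fun x : t i => (x : Euc n)) := by
    intro i
    exact (hs i).range.mono (s := (t i : Set (Euc n))) (htr i).subset
  obtain ⟨Ω, v₀, hΩ, hrig⟩ := functional_rigid hn φ hφ t htc hti
  have hsum : ∀ i, ∑ x ∈ t i, x = ((m : ℝ) + 1) • bary (s i) := by
    intro i
    have hm : ((m : ℝ) + 1) ≠ 0 := by positivity
    rw [Finset.sum_image fun x _ y _ hxy => (hs i).injective hxy, bary, smul_smul]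
    simp [mul_inv_cancel₀ hm]
  have hpos : ∀ i, 0 < (μH[((m + 1 : ℕ) : ℝ) - 1] (simplexSet (s i))).toReal := by
    intro i
    exact measure_simplex_pos_finite (s i) 0 (hs i) _ (by simp)
  have hsys : sys (((m + 1 : ℕ) : ℝ) - 1) s F =
      ∑ i, (μH[((m + 1 : ℕ) : ℝ) - 1] (simplexSet (s i))).toReal •
        dl (((m + 1 : ℕ) : ℝ) - 1) (t i) (F i) := by
    ext1 S
    rw [Finset.sum_apply]
    refine Finset.sum_congr rfl fun i _ => ?_
    simp only [Pi.smul_apply, dl, LinearMap.coe_mk, AddHom.coe_mk]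
    rw [hconv, smul_smul, mul_div_cancel₀ _ (hpos i).ne']
  obtain ⟨hforce, htorque⟩ := hequil
  rw [hsys, map_sum]
  have h1 : ∑ i, (μH[((m + 1 : ℕ) : ℝ) - 1] (simplexSet (s i))).toReal * ⟪v₀, F i⟫ = 0 := by
    have := congrArg (fun x => ⟪v₀, x⟫) hforce
    simpa only [inner_sum, real_inner_smul_right, inner_zero_right] using this
  have h2 := torque_zero Ω hΩ _ (fun i => bary (s i)) F htorque
  calc ∑ i, φ ((μH[((m + 1 : ℕ) : ℝ) - 1] (simplexSet (s i))).toReal •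
        dl (((m + 1 : ℕ) : ℝ) - 1) (t i) (F i))
      = ∑ i, (μH[((m + 1 : ℕ) : ℝ) - 1] (simplexSet (s i))).toReal * ⟪v₀, F i⟫ +
        ((m : ℝ) + 1) * ∑ i, (μH[((m + 1 : ℕ) : ℝ) - 1] (simplexSet (s i))).toReal *
          ⟪Ω (bary (s i)), F i⟫ := by
        rw [Finset.mul_sum, ← Finset.sum_add_distrib]
        refine Finset.sum_congr rfl fun i _ => ?_
        rw [map_smul, hrig, hsum, map_smul, inner_add_left, real_inner_smul_left, smul_eq_mul]
        ring
    _ = 0 := by rw [h1, h2]; simp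

end
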